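/- Let C be a triangulated category and let D be a negative additive full subcategory of C, i.e., Hom(X, Y[i]) = 0 for all objects X, Y of D and all integers i > 0. Let T = ⟨D⟩ be the smallest full Karoubi-closed triangulated subcategory of C containing D. Then there exists a unique weight structure w_T on T such that all objects of D lie in T_{w_T=0}; this weight structure is bounded, and its heart equals the Karoubi-closure of D in C. Moreover, if in addition there exists a weight structure w on C with all objects of D lying in C_{w=0}, then the embedding T → C is strictly weight-exact: T_{w_T≤0} = Obj T ∩ C_{w≤0} and T_{w_T≥0} = Obj T ∩ C_{w≥0}. -/

import Mathlib

/-!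
Let `w ≥ n + 1` be the class of objects receiving no nonzero morphism from `D[i]`, `i ≤ n`, and
let `w ≤ n` be its left orthogonal; the point is the existence of weight decompositions.
Extensions: decompositions of the outer terms of a distinguished triangle are connected by a
morphism of triangles, and the four lemma, used in place of the octahedral axiom, shows that the
cone in the middle receives nothing from `D[i]`. Retracts: the fibre of a retraction `N ⟶ M` is
itself a retract of `N`, so decompositions of `N` pass to all its retracts by induction on the
level, starting from a level `n` with `N ∈ w ≥ n + 1`, where the decomposition is trivial.

The heart is `D` up to retracts because a morphism from a finite extension of the `D[i]`, `i ≤ 0`,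
to an object of weight `≥ 0` factors through `D`. Hence every object of `⟨D⟩` can be built from the
retracts of shifts of `D` occurring in its weight range, by peeling off its lowest weight. Any
weight structure with `D` in its heart, on `⟨D⟩` or on `C`, therefore restricts to these orthogonal
classes on `⟨D⟩`, which gives both uniqueness and strict weight-exactness.
-/

open CategoryTheory CategoryTheory.Limits CategoryTheory.Pretriangulated

namespace CWH

/-- `X` is a retract of `Y`. -/
def IsRetract {C : Type*} [Category C] (X Y : C) : Prop :=
  ∃ (i : X ⟶ Y) (r : Y ⟶ X), i ≫ r = 𝟙 X

/-- The Karoubi-closure of a class of objects: all retracts of its objects. -/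
def retractClosure {C : Type*} [Category C] (S : Set C) : Set C :=
  {X : C | ∃ Y ∈ S, IsRetract X Y}

variable (C : Type*) [Category C] [HasZeroObject C] [HasShift C ℤ]
  [Preadditive C] [∀ n : ℤ, (shiftFunctor C n).Additive] [Pretriangulated C]

/-- A weight structure on a (pre)triangulated category (homological convention):
a pair of retract-closed classes `LE = C_{w≤0}` and `GE = C_{w≥0}` such that
`C_{w≤0} ⊆ C_{w≤0}[1]`, `C_{w≥0}[1] ⊆ C_{w≥0}`, `Hom(C_{w≤0}, C_{w≥0}[1]) = 0`,
and every object admits a weight decomposition. -/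
structure WeightStructure where
  LE : Set C
  GE : Set C
  retract_LE : ∀ ⦃X Y : C⦄, IsRetract X Y → Y ∈ LE → X ∈ LE
  retract_GE : ∀ ⦃X Y : C⦄, IsRetract X Y → Y ∈ GE → X ∈ GE
  shift_LE : ∀ ⦃X : C⦄, X ∈ LE → X⟦(-1 : ℤ)⟧ ∈ LE
  shift_GE : ∀ ⦃X : C⦄, X ∈ GE → X⟦(1 : ℤ)⟧ ∈ GE
  orthogonal : ∀ ⦃X Y : C⦄, X ∈ LE → Y ∈ GE → ∀ f : X ⟶ Y⟦(1 : ℤ)⟧, f = 0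
  decomp : ∀ M : C, ∃ (X Y : C) (f : X ⟶ M) (g : M ⟶ Y) (h : Y ⟶ X⟦(1 : ℤ)⟧),
    Triangle.mk f g h ∈ (distTriang C) ∧ X ∈ LE ∧ Y⟦(-1 : ℤ)⟧ ∈ GE

variable {C}

namespace WeightStructure

variable (w : WeightStructure C)

/-- `C_{w≤i} = C_{w≤0}[i]`. -/
def le (i : ℤ) : Set C := {X : C | X⟦(-i)⟧ ∈ w.LE}

/-- `C_{w≥i} = C_{w≥0}[i]`. -/
def ge (i : ℤ) : Set C := {X : C | X⟦(-i)⟧ ∈ w.GE}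

/-- `C_{w=i} = C_{w≤i} ∩ C_{w≥i}`. -/
def eqw (i : ℤ) : Set C := w.le i ∩ w.ge i

/-- `w` is bounded if every object lies in some `C_{w≤i}` and in some `C_{w≥i}`. -/
def IsBounded : Prop := ∀ X : C, (∃ i : ℤ, X ∈ w.le i) ∧ (∃ i : ℤ, X ∈ w.ge i)

end WeightStructure

/-- The extension-closure of a class `S` of objects: the smallest class containing
the zero objects and `S` and closed under extensions (distinguished triangles). -/
inductive ExtClosure (S : Set C) : C → Prop
  | zero (X : C) : IsZero X → ExtClosure S X
  | of (X : C) : X ∈ S → ExtClosure S X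
  | ext {A E B : C} (f : A ⟶ E) (g : E ⟶ B) (h : B ⟶ A⟦(1 : ℤ)⟧) :
      Triangle.mk f g h ∈ (distTriang C) → ExtClosure S A → ExtClosure S B → ExtClosure S E

/-- The smallest full Karoubi-closed (strict) triangulated subcategory containing `S`:
closure under zero objects, shifts, cones and retracts. -/
inductive TriangClosure (S : Set C) : C → Prop
  | of (X : C) : X ∈ S → TriangClosure S X
  | zero (X : C) : IsZero X → TriangClosure S X
  | shift (X : C) (n : ℤ) : TriangClosure S X → TriangClosure S (X⟦n⟧)
  | ext {X Y Z : C} (f : X ⟶ Y) (g : Y ⟶ Z) (h : Z ⟶ X⟦(1 : ℤ)⟧) :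
      Triangle.mk f g h ∈ (distTriang C) → TriangClosure S X → TriangClosure S Y →
      TriangClosure S Z
  | retract (X Y : C) : IsRetract X Y → TriangClosure S Y → TriangClosure S X

/-- A (strict) full triangulated subcategory, given by its class of objects:
it contains the zero objects and is closed under shifts and under the
two-out-of-three property for distinguished triangles. -/
structure IsTriangulatedSub (P : Set C) : Prop where
  zero : ∀ X : C, IsZero X → X ∈ P
  shift : ∀ X ∈ P, ∀ n : ℤ, X⟦n⟧ ∈ P
  ext₂ : ∀ ⦃X Y Z : C⦄ (f : X ⟶ Y) (g : Y ⟶ Z) (h : Z ⟶ X⟦(1 : ℤ)⟧),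
    Triangle.mk f g h ∈ (distTriang C) → X ∈ P → Z ∈ P → Y ∈ P
  ext₃ : ∀ ⦃X Y Z : C⦄ (f : X ⟶ Y) (g : Y ⟶ Z) (h : Z ⟶ X⟦(1 : ℤ)⟧),
    Triangle.mk f g h ∈ (distTriang C) → X ∈ P → Y ∈ P → Z ∈ P
  ext₁ : ∀ ⦃X Y Z : C⦄ (f : X ⟶ Y) (g : Y ⟶ Z) (h : Z ⟶ X⟦(1 : ℤ)⟧),
    Triangle.mk f g h ∈ (distTriang C) → Y ∈ P → Z ∈ P → X ∈ P

/-- A weight structure on the full (triangulated) subcategory of `C` whose objects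
are given by the class `P`; retracts are taken inside `P` and the distinguished
triangles of the subcategory are the distinguished triangles of `C` with vertices
in `P`. -/
structure IsWeightStructureOn (P LEs GEs : Set C) : Prop where
  le_sub : LEs ⊆ P
  ge_sub : GEs ⊆ P
  retract_le : ∀ ⦃X Y : C⦄, X ∈ P → IsRetract X Y → Y ∈ LEs → X ∈ LEs
  retract_ge : ∀ ⦃X Y : C⦄, X ∈ P → IsRetract X Y → Y ∈ GEs → X ∈ GEs
  shift_le : ∀ ⦃X : C⦄, X ∈ LEs → X⟦(-1 : ℤ)⟧ ∈ LEs
  shift_ge : ∀ ⦃X : C⦄, X ∈ GEs → X⟦(1 : ℤ)⟧ ∈ GEs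
  orthogonal : ∀ ⦃X Y : C⦄, X ∈ LEs → Y ∈ GEs → ∀ f : X ⟶ Y⟦(1 : ℤ)⟧, f = 0
  decomp : ∀ M ∈ P, ∃ (X Y : C) (f : X ⟶ M) (g : M ⟶ Y) (h : Y ⟶ X⟦(1 : ℤ)⟧),
    Triangle.mk f g h ∈ (distTriang C) ∧ X ∈ LEs ∧ Y⟦(-1 : ℤ)⟧ ∈ GEs

/-- The class of morphisms of `C` whose cone lies in `P`; the Verdier quotient
`C/P` is the localization of `C` at this class. -/
def coneIn (P : Set C) : MorphismProperty C := fun X Y f =>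
  ∃ (Z : C) (g : Y ⟶ Z) (h : Z ⟶ X⟦(1 : ℤ)⟧),
    Triangle.mk f g h ∈ (distTriang C) ∧ Z ∈ P

/-- A weight Postnikov tower for `M`: choices of weight truncations `trunc l = w_{≤l}M`
(with cones `conePt l = w_{≥l+1}M`), of the connecting morphisms between them that are
compatible with `𝟙 M`, and of the distinguished triangles
`w_{≤l}M → w_{≤l+1}M → M^{-l-1}[l+1] → (w_{≤l}M)[1]`; the objects `termAt l = M^{-l}`
lie in the heart and are the terms of the associated weight complex `t(M)`, whose
boundary morphisms `bd (l+1) l : M^{-l-1} → M^{-l}` are obtained by composing the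
connecting morphisms of two consecutive triangles. -/
structure WeightPostnikovTower (w : WeightStructure C) (M : C) where
  trunc : ℤ → C
  trunc_mem : ∀ l : ℤ, trunc l ∈ w.le l
  ι : ∀ l : ℤ, trunc l ⟶ M
  conePt : ℤ → C
  cone_mem : ∀ l : ℤ, conePt l ∈ w.ge (l + 1)
  coneπ : ∀ l : ℤ, M ⟶ conePt l
  coneδ : ∀ l : ℤ, conePt l ⟶ (trunc l)⟦(1 : ℤ)⟧
  trunc_dist : ∀ l : ℤ, Triangle.mk (ι l) (coneπ l) (coneδ l) ∈ (distTriang C)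
  step : ∀ l : ℤ, trunc l ⟶ trunc (l + 1)
  step_ι : ∀ l : ℤ, step l ≫ ι (l + 1) = ι l
  termAt : ℤ → C
  term_mem : ∀ l : ℤ, termAt l ∈ w.LE ∧ termAt l ∈ w.GE
  sπ : ∀ l : ℤ, trunc l ⟶ (termAt l)⟦l⟧
  sδ : ∀ l : ℤ, (termAt (l + 1))⟦(l + 1 : ℤ)⟧ ⟶ (trunc l)⟦(1 : ℤ)⟧
  step_dist : ∀ l : ℤ, Triangle.mk (step l) (sπ (l + 1)) (sδ l) ∈ (distTriang C)
  bd : ∀ i j : ℤ, termAt i ⟶ termAt j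
  bd_shape : ∀ i j : ℤ, j + 1 ≠ i → bd i j = 0
  bd_eq : ∀ l : ℤ,
    (shiftFunctor C (l + 1)).map (bd (l + 1) l) ≫
      (shiftFunctorAdd' C l 1 (l + 1) rfl).hom.app (termAt l) =
    sδ l ≫ (shiftFunctor C (1 : ℤ)).map (sπ l)

/-- The differential of the weight complex associated to a weight Postnikov tower,
in "homological" indexing: the `l`-th term `termAt l` is the `(-l)`-th term `M^{-l}`
of the weight complex. -/
def towerD {w : WeightStructure C} {M : C} (T : WeightPostnikovTower w M) :
    ∀ l : ℤ, T.termAt (l + 1) ⟶ T.termAt l :=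
  fun l => T.bd (l + 1) l

section Complexes

variable {X Y : ℤ → C}

/-- A morphism of ("homologically indexed") complexes. -/
def IsChainMapDown (X Y : ℤ → C) (dX : ∀ l : ℤ, X (l + 1) ⟶ X l)
    (dY : ∀ l : ℤ, Y (l + 1) ⟶ Y l) (f : ∀ l : ℤ, X l ⟶ Y l) : Prop :=
  ∀ l : ℤ, f (l + 1) ≫ dY l = dX l ≫ f l

/-- Two families of morphisms of complexes are chain homotopic. -/
def ChainHomotopicDown (X Y : ℤ → C) (dX : ∀ l : ℤ, X (l + 1) ⟶ X l)
    (dY : ∀ l : ℤ, Y (l + 1) ⟶ Y l) (f g : ∀ l : ℤ, X l ⟶ Y l) : Prop :=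
  ∃ s : ∀ l : ℤ, X l ⟶ Y (l + 1),
    ∀ l : ℤ, f (l + 1) - g (l + 1) = s (l + 1) ≫ dY (l + 1) + dX l ≫ s l

/-- Two complexes are homotopy equivalent (i.e., isomorphic in the homotopy category). -/
def HomotopyEquivDown (X Y : ℤ → C) (dX : ∀ l : ℤ, X (l + 1) ⟶ X l)
    (dY : ∀ l : ℤ, Y (l + 1) ⟶ Y l) : Prop :=
  ∃ (f : ∀ l : ℤ, X l ⟶ Y l) (g : ∀ l : ℤ, Y l ⟶ X l),
    IsChainMapDown X Y dX dY f ∧ IsChainMapDown Y X dY dX g ∧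
    ChainHomotopicDown X X dX dX (fun l => f l ≫ g l) (fun l => 𝟙 (X l)) ∧
    ChainHomotopicDown Y Y dY dY (fun l => g l ≫ f l) (fun l => 𝟙 (Y l))

end Complexes

section Retracts

variable {𝒜 ℬ : Type*} [Category 𝒜] [Category ℬ]

lemma IsRetract.of_iso {X Y : 𝒜} (e : X ≅ Y) : IsRetract X Y := ⟨e.hom, e.inv, e.hom_inv_id⟩

lemma IsRetract.trans {X Y Z : 𝒜} : IsRetract X Y → IsRetract Y Z → IsRetract X Z := by
  rintro ⟨i, r, hir⟩ ⟨j, s, hjs⟩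
  exact ⟨i ≫ j, s ≫ r, by simp [reassoc_of% hjs, hir]⟩

lemma IsRetract.map {X Y : 𝒜} (F : 𝒜 ⥤ ℬ) : IsRetract X Y → IsRetract (F.obj X) (F.obj Y) := by
  rintro ⟨i, r, hir⟩
  exact ⟨F.map i, F.map r, by rw [← F.map_comp, hir, F.map_id]⟩

lemma IsRetract.prop {P : ObjectProperty 𝒜} [P.IsStableUnderRetracts] {X Y : 𝒜} :
    IsRetract X Y → P Y → P X :=
  fun ⟨i, r, hir⟩ => P.prop_of_retract ⟨i, r, hir⟩

variable [HasZeroMorphisms 𝒜] (P : ObjectProperty 𝒜)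

instance : P.rightOrthogonal.IsStableUnderRetracts where
  of_retract h hY A f hA := by
    rw [← Category.comp_id f, ← h.retract, ← Category.assoc, hY (f ≫ h.i) hA, zero_comp]

instance : P.leftOrthogonal.IsStableUnderRetracts where
  of_retract h hX B f hB := by
    rw [← Category.id_comp f, ← h.retract, Category.assoc, hX (h.r ≫ f) hB, comp_zero]

end Retracts

section OrthogonalClasses

variable {𝒜 : Type*} [Category 𝒜] [HasShift 𝒜 ℤ] {D : Set 𝒜} {m n : ℤ}

/-- The class `⋃_{i ≤ n} D[i]`, closed under isomorphisms. -/
def shiftsLE (D : Set 𝒜) (n : ℤ) : Set 𝒜 := {X | ∃ Z ∈ D, ∃ i ≤ n, Nonempty (X ≅ Z⟦i⟧)}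

lemma subset_shiftsLE_zero : D ⊆ shiftsLE D 0 :=
  fun Z hZ => ⟨Z, hZ, 0, le_rfl, ⟨(shiftZero ℤ Z).symm⟩⟩

lemma shiftsLE_subset_shiftsLE (h : n ≤ m) : shiftsLE D n ⊆ shiftsLE D m :=
  fun _ ⟨Z, hZ, i, hi, e⟩ => ⟨Z, hZ, i, hi.trans h, e⟩

lemma shift_mem_shiftsLE_of_mem {X : 𝒜} (hX : X ∈ shiftsLE D n) {k : ℤ} (h : n + k = m) :
    X⟦k⟧ ∈ shiftsLE D m := by
  obtain ⟨Z, hZ, i, hi, ⟨e⟩⟩ := hX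
  exact ⟨Z, hZ, i + k, by lia, ⟨(shiftFunctor 𝒜 k).mapIso e ≪≫ (shiftAdd Z i k).symm⟩⟩

variable [HasZeroMorphisms 𝒜]

lemma eq_zero_of_shift {X Y X' Y' : 𝒜} (k : ℤ) (eX : X' ≅ X⟦k⟧) (eY : Y⟦k⟧ ≅ Y')
    (h : ∀ f : X' ⟶ Y', f = 0) (f : X ⟶ Y) : f = 0 := by
  apply (shiftFunctor 𝒜 k).map_injective
  rw [← cancel_epi eX.hom, ← cancel_mono eY.hom, h ((eX.hom ≫ f⟦k⟧') ≫ eY.hom),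
    Functor.map_zero, comp_zero, zero_comp]

/-- The class of objects that receive no nonzero morphism from `D[i]`, `i ≤ n`. On `⟨D⟩` this is the
class `w ≥ n + 1` of the weight structure generated by `D`. -/
abbrev weightGT (D : Set 𝒜) (n : ℤ) : ObjectProperty 𝒜 :=
  ObjectProperty.rightOrthogonal (· ∈ shiftsLE D n)

/-- The left orthogonal of `weightGT D n`. On `⟨D⟩` this is the class `w ≤ n` of the weight
structure generated by `D`. -/
abbrev weightLE (D : Set 𝒜) (n : ℤ) : ObjectProperty 𝒜 :=
  (weightGT D n).leftOrthogonal

lemma weightGT_antitone (D : Set 𝒜) : Antitone (weightGT D) :=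
  fun _ _ h _ hY _ f hX => hY f (shiftsLE_subset_shiftsLE h hX)

lemma weightLE_monotone (D : Set 𝒜) : Monotone (weightLE D) :=
  fun _ _ h _ hX _ f hY => hX f (weightGT_antitone D h _ hY)

lemma shiftsLE_subset_weightLE : shiftsLE D n ⊆ {X | weightLE D n X} :=
  fun _ hX _ f hY => hY f hX

lemma weightGT_shift {Y : 𝒜} (hY : weightGT D n Y) (k : ℤ) (h : n + k = m) :
    weightGT D m (Y⟦k⟧) := fun X f hX =>
  eq_zero_of_shift (-k) (Iso.refl _) (shiftShiftNeg Y k)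
    (fun f => hY f (shift_mem_shiftsLE_of_mem hX (by lia))) f

lemma weightLE_shift {X : 𝒜} (hX : weightLE D n X) (k : ℤ) (h : n + k = m) :
    weightLE D m (X⟦k⟧) := fun Y f hY =>
  eq_zero_of_shift (-k) (shiftShiftNeg X k).symm (Iso.refl _)
    (fun f => hX f (weightGT_shift hY (-k) (by lia))) f

/-- Negativity of the full subcategory on `D`: `Hom(X, Y[i]) = 0` for `X, Y ∈ D` and `i > 0`. -/
def IsNegative (D : Set 𝒜) : Prop :=
  ∀ ⦃X Y : 𝒜⦄, X ∈ D → Y ∈ D → ∀ i : ℤ, 0 < i → ∀ f : X ⟶ Y⟦i⟧, f = 0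

lemma IsNegative.weightGT (hD : IsNegative D) {Y : 𝒜} (hY : Y ∈ D) : weightGT D (-1) Y := by
  rintro X f ⟨Z, hZ, i, hi, ⟨e⟩⟩
  exact eq_zero_of_shift (-i) ((shiftShiftNeg Z i).symm ≪≫ (shiftFunctor 𝒜 (-i)).mapIso e.symm)
    (Iso.refl _) (hD hZ hY (-i) (by lia)) f

end OrthogonalClasses

lemma ExtClosure.shift {S S' : Set C} {k : ℤ} (hS : ∀ X ∈ S, X⟦k⟧ ∈ S') {X : C}
    (hX : ExtClosure S X) : ExtClosure S' (X⟦k⟧) := by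
  induction hX with
  | zero X hX => exact .zero _ ((shiftFunctor C k).map_isZero hX)
  | of X hX => exact .of _ (hS X hX)
  | ext f g h hT _ _ ihA ihB => exact .ext _ _ _ (Triangle.shift_distinguished _ hT k) ihA ihB

lemma ExtClosure.weightLE {D : Set C} {n : ℤ} {X : C} (hX : ExtClosure (shiftsLE D n) X) :
    weightLE D n X := by
  induction hX with
  | zero X hX => exact ObjectProperty.prop_of_isZero _ hX
  | of X hX => exact shiftsLE_subset_weightLE hX
  | ext f g h hT _ _ ihA ihB =>
    exact (CWH.weightLE D n).ext_of_isTriangulatedClosed₂ _ hT ihA ihB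

lemma TriangClosure.of_iso {S : Set C} {X Y : C} (e : X ≅ Y) (hY : TriangClosure S Y) :
    TriangClosure S X :=
  .retract X Y (.of_iso e) hY

lemma TriangClosure.ext₂ {S : Set C} {T : Triangle C} (hT : T ∈ distTriang C)
    (h₁ : TriangClosure S T.obj₁) (h₃ : TriangClosure S T.obj₃) : TriangClosure S T.obj₂ :=
  .ext _ _ _ (inv_rot_of_distTriang T hT) (h₃.shift _ (-1)) h₁

lemma ExtClosure.triangClosure {D : Set C} {n : ℤ} {X : C} (hX : ExtClosure (shiftsLE D n) X) :
    TriangClosure D X := by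
  induction hX with
  | zero X hX => exact .zero X hX
  | of X hX =>
    obtain ⟨Z, hZ, i, -, ⟨e⟩⟩ := hX
    exact .of_iso e ((TriangClosure.of Z hZ).shift Z i)
  | ext f g h hT _ _ ihA ihB => exact TriangClosure.ext₂ hT ihA ihB

section Triangles

lemma exists_eq_mor₁_comp {T : Triangle C} (hT : T ∈ distTriang C) {Y : C} (u : T.obj₁ ⟶ Y)
    (hu : T.mor₃ ≫ u⟦(1 : ℤ)⟧' = 0) : ∃ t : T.obj₂ ⟶ Y, u = T.mor₁ ≫ t := by
  obtain ⟨t, ht, -⟩ := complete_distinguished_triangle_morphism₂ T _ hT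
    (contractible_distinguished Y) u 0 (hu.trans zero_comp.symm)
  exact ⟨t, (Category.comp_id u).symm.trans ht.symm⟩

lemma exists_eq_comp_shift_mor₁ {T : Triangle C} (hT : T ∈ distTriang C) {E : C}
    (f : E ⟶ T.obj₂⟦(1 : ℤ)⟧) (hf : f ≫ T.mor₂⟦(1 : ℤ)⟧' = 0) :
    ∃ s : E ⟶ T.obj₁⟦(1 : ℤ)⟧, f = s ≫ T.mor₁⟦(1 : ℤ)⟧' := by
  obtain ⟨s : E ⟶ T.obj₁⟦(1 : ℤ)⟧, hs⟩ :=
    Triangle.coyoneda_exact₁ _ (rot_of_distTriang _ hT) f hf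
  exact ⟨-s, hs.trans ((Preadditive.comp_neg s _).trans (Preadditive.neg_comp s _).symm)⟩

lemma isRetract_of_mor₂_eq_zero {T : Triangle C} (hT : T ∈ distTriang C) (h : T.mor₂ = 0) :
    IsRetract T.obj₂ T.obj₁ := by
  obtain ⟨s, hs⟩ := Triangle.coyoneda_exact₂ T hT (𝟙 _) (by rw [h, comp_zero])
  exact ⟨s, T.mor₁, hs.symm⟩

lemma isRetract_of_mor₁_eq_zero {T : Triangle C} (hT : T ∈ distTriang C) (h : T.mor₁ = 0) :
    IsRetract T.obj₂ T.obj₃ := by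
  obtain ⟨s, hs⟩ := Triangle.yoneda_exact₂ T hT (𝟙 _) (by rw [h, zero_comp])
  exact ⟨T.mor₂, s, hs.symm⟩

lemma exists_distTriang_of_isRetract {M N : C} (h : IsRetract M N) :
    ∃ T ∈ distTriang C, T.obj₂ = N ∧ T.obj₃ = M ∧ IsRetract T.obj₁ N := by
  obtain ⟨i, r, hir⟩ := h
  have : IsSplitEpi r := ⟨⟨⟨i, hir⟩⟩⟩
  obtain ⟨F, j, δ, hT⟩ := distinguished_cocone_triangle₁ r
  have : Mono j :=
    Triangle.mono₁ _ hT (Triangle.mor₃_eq_zero_of_epi₂ _ hT (inferInstanceAs (Epi r)))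
  have : IsSplitMono j := isSplitMono_of_mono j
  have hF : IsRetract F N := ⟨j, retraction j, IsSplitMono.id j⟩
  exact ⟨_, hT, rfl, rfl, hF⟩

end Triangles

section FourLemma

lemma rightComp_comp_eq_of_comm {𝒜 : Type*} [Category 𝒜] [Preadditive 𝒜] (E : 𝒜) {W X Y Z : 𝒜}
    {f : W ⟶ X} {g : X ⟶ Z} {f' : W ⟶ Y} {g' : Y ⟶ Z} (h : f ≫ g = f' ≫ g') :
    (Preadditive.rightComp E g).comp (Preadditive.rightComp E f) =
      (Preadditive.rightComp E g').comp (Preadditive.rightComp E f') := by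
  ext φ
  simp [Preadditive.rightComp, h]

variable {T T' : Triangle C}

lemma exact_rightComp (hT : T ∈ distTriang C) (E : C) :
    Function.Exact (Preadditive.rightComp E T.mor₁) (Preadditive.rightComp E T.mor₂) := by
  refine fun φ => ⟨fun hφ => ?_, ?_⟩
  · obtain ⟨ψ, hψ⟩ := Triangle.coyoneda_exact₂ T hT φ hφ
    exact ⟨ψ, hψ.symm⟩
  · rintro ⟨ψ, rfl⟩
    simp [Preadditive.rightComp, comp_distTriang_mor_zero₁₂ T hT]

lemma forall_hom_cone_eq_zero_iff (hT : T ∈ distTriang C) (E : C) :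
    (∀ φ : E ⟶ T.obj₃, φ = 0) ↔ Function.Surjective (Preadditive.rightComp E T.mor₁) ∧
      Function.Injective (Preadditive.rightComp E (T.mor₁⟦(1 : ℤ)⟧')) := by
  rw [injective_iff_map_eq_zero]
  refine ⟨fun h => ⟨fun φ => ?_, fun φ hφ => ?_⟩, fun ⟨hsurj, hinj⟩ φ => ?_⟩
  · obtain ⟨ψ, hψ⟩ := Triangle.coyoneda_exact₂ T hT φ (h _)
    exact ⟨ψ, hψ.symm⟩
  · obtain ⟨ψ, rfl⟩ := Triangle.coyoneda_exact₁ T hT φ hφ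
    rw [h ψ, zero_comp]
  · have hφ : φ ≫ T.mor₃ = 0 :=
      hinj _ (by simp [Preadditive.rightComp, comp_distTriang_mor_zero₃₁ T hT])
    obtain ⟨ψ, rfl⟩ := Triangle.coyoneda_exact₃ T hT φ hφ
    obtain ⟨χ, rfl⟩ := hsurj ψ
    simp [Preadditive.rightComp, comp_distTriang_mor_zero₁₂ T hT]

variable (hT : T ∈ distTriang C) (hT' : T' ∈ distTriang C) (φ : T ⟶ T') {E : C}

include hT hT' in
lemma surjective_rightComp_hom₂ (h₁ : Function.Surjective (Preadditive.rightComp E φ.hom₁))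
    (h₃ : Function.Surjective (Preadditive.rightComp E φ.hom₃))
    (h₄ : Function.Injective (Preadditive.rightComp E (φ.hom₁⟦(1 : ℤ)⟧'))) :
    Function.Surjective (Preadditive.rightComp E φ.hom₂) :=
  AddMonoidHom.surjective_of_surjective_of_surjective_of_injective _ _ _ _ _ _ _ _ _ _
    (rightComp_comp_eq_of_comm E φ.comm₁.symm) (rightComp_comp_eq_of_comm E φ.comm₂.symm)
    (rightComp_comp_eq_of_comm E φ.comm₃.symm) (exact_rightComp (rot_of_distTriang _ hT) E)
    (exact_rightComp hT' E) (exact_rightComp (rot_of_distTriang _ hT') E) h₁ h₃ h₄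

include hT hT' in
lemma injective_rightComp_hom₃ (h₁ : Function.Surjective (Preadditive.rightComp E φ.hom₁))
    (h₂ : Function.Injective (Preadditive.rightComp E φ.hom₂))
    (h₄ : Function.Injective (Preadditive.rightComp E (φ.hom₁⟦(1 : ℤ)⟧'))) :
    Function.Injective (Preadditive.rightComp E φ.hom₃) :=
  AddMonoidHom.injective_of_surjective_of_injective_of_injective _ _ _ _ _ _ _ _ _ _
    (rightComp_comp_eq_of_comm E φ.comm₁.symm) (rightComp_comp_eq_of_comm E φ.comm₂.symm)
    (rightComp_comp_eq_of_comm E φ.comm₃.symm) (exact_rightComp hT E)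
    (exact_rightComp (rot_of_distTriang _ hT) E) (exact_rightComp hT' E) h₁ h₂ h₄

include hT hT' in
lemma forall_hom_cone₂_eq_zero {B₁ B₂ B₃ : C} {g₁ : T'.obj₁ ⟶ B₁} {h₁ : B₁ ⟶ T.obj₁⟦(1 : ℤ)⟧}
    {g₂ : T'.obj₂ ⟶ B₂} {h₂ : B₂ ⟶ T.obj₂⟦(1 : ℤ)⟧}
    {g₃ : T'.obj₃ ⟶ B₃} {h₃ : B₃ ⟶ T.obj₃⟦(1 : ℤ)⟧}
    (d₁ : Triangle.mk φ.hom₁ g₁ h₁ ∈ distTriang C) (d₂ : Triangle.mk φ.hom₂ g₂ h₂ ∈ distTriang C)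
    (d₃ : Triangle.mk φ.hom₃ g₃ h₃ ∈ distTriang C)
    (hB₁ : ∀ f : E ⟶ B₁, f = 0) (hB₃ : ∀ f : E ⟶ B₃, f = 0) (f : E ⟶ B₂) : f = 0 := by
  obtain ⟨surj₁, inj₁⟩ := (forall_hom_cone_eq_zero_iff d₁ E).1 hB₁
  obtain ⟨surj₃, inj₃⟩ := (forall_hom_cone_eq_zero_iff d₃ E).1 hB₃
  have surj₂ := surjective_rightComp_hom₂ hT hT' φ surj₁ surj₃ inj₁
  have inj₂ := injective_rightComp_hom₃ (rot_of_distTriang _ (rot_of_distTriang _ hT))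
    (rot_of_distTriang _ (rot_of_distTriang _ hT'))
    ((rotate C).map ((rotate C).map φ)) surj₃ inj₁ inj₃
  exact (forall_hom_cone_eq_zero_iff d₂ E).2 ⟨surj₂, inj₂⟩ f

end FourLemma

section WeightDecompositions

open scoped ZeroObject

variable {D : Set C} {m n : ℤ} {M N : C}

/-- A weight decomposition of `M` at level `n`: a distinguished triangle `A → M → B → A[1]` with `A`
a finite extension of objects of `D[i]`, `i ≤ n`, and `B` in `weightGT D n`. -/
def HasWeightDecomposition (D : Set C) (n : ℤ) (M : C) : Prop :=
  ∃ (A B : C) (f : A ⟶ M) (g : M ⟶ B) (h : B ⟶ A⟦(1 : ℤ)⟧),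
    Triangle.mk f g h ∈ (distTriang C) ∧ ExtClosure (shiftsLE D n) A ∧ weightGT D n B

lemma HasWeightDecomposition.of_weightGT (hM : weightGT D n M) : HasWeightDecomposition D n M :=
  ⟨0, M, 0, 𝟙 M, 0, contractible_distinguished₁ M, .zero _ (isZero_zero C), hM⟩

lemma HasWeightDecomposition.of_extClosure (hM : ExtClosure (shiftsLE D n) M) :
    HasWeightDecomposition D n M :=
  ⟨M, 0, 𝟙 M, 0, 0, contractible_distinguished M, hM, ObjectProperty.prop_zero _⟩

lemma HasWeightDecomposition.shift (hM : HasWeightDecomposition D n M) (k : ℤ) (h : n + k = m) :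
    HasWeightDecomposition D m (M⟦k⟧) := by
  obtain ⟨A, B, _, _, _, hT, hA, hB⟩ := hM
  exact ⟨A⟦k⟧, B⟦k⟧, _, _, _, Triangle.shift_distinguished _ hT k,
    hA.shift fun _ hX => shift_mem_shiftsLE_of_mem hX h, weightGT_shift hB k h⟩

/-- The decompositions of the outer terms are connected by a morphism of triangles, because
`Hom(A₃, B₁[1]) = 0`; the four lemma then controls the cone of `A₂ → T.obj₂`. -/
lemma HasWeightDecomposition.ext {T : Triangle C} (hT : T ∈ distTriang C)
    (h₁ : HasWeightDecomposition D n T.obj₁) (h₃ : HasWeightDecomposition D n T.obj₃) :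
    HasWeightDecomposition D n T.obj₂ := by
  obtain ⟨A₁, B₁, a₁, b₁, c₁, d₁, hA₁, hB₁⟩ := h₁
  obtain ⟨A₃, B₃, a₃, b₃, c₃, d₃, hA₃, hB₃⟩ := h₃
  have hB₁' : weightGT D n (B₁⟦(1 : ℤ)⟧) :=
    weightGT_antitone D (by lia) _ (weightGT_shift hB₁ 1 rfl)
  obtain ⟨s, hs⟩ : ∃ s : A₃ ⟶ A₁⟦(1 : ℤ)⟧, a₃ ≫ T.mor₃ = s ≫ a₁⟦(1 : ℤ)⟧' :=
    exists_eq_comp_shift_mor₁ d₁ _ (hA₃.weightLE _ hB₁')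
  obtain ⟨A₂, i, p, dA⟩ := distinguished_cocone_triangle₂ s
  obtain ⟨a₂, comm₁, comm₂⟩ :=
    complete_distinguished_triangle_morphism₂ _ T dA hT a₁ a₃ hs.symm
  obtain ⟨B₂, b₂, c₂, d₂⟩ := distinguished_cocone_triangle a₂
  refine ⟨A₂, B₂, a₂, b₂, c₂, d₂, .ext i p s dA hA₁ hA₃, fun E f hE => ?_⟩
  exact forall_hom_cone₂_eq_zero dA hT ⟨a₁, a₂, a₃, comm₁, comm₂, hs.symm⟩ d₁ d₂ d₃
    (fun f => hB₁ f hE) (fun f => hB₃ f hE) f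

lemma HasWeightDecomposition.cone {T : Triangle C} (hT : T ∈ distTriang C)
    (h₁ : HasWeightDecomposition D (n - 1) T.obj₁) (h₂ : HasWeightDecomposition D n T.obj₂) :
    HasWeightDecomposition D n T.obj₃ :=
  .ext (rot_of_distTriang T hT) h₂ (h₁.shift 1 (by lia))

/-- For `n ≤ m` the retract itself lies in `weightGT D n`. A retract `M` of `N` is the cone of
`F ⟶ N` with `F` another retract of `N`, so level `n - 1` for all retracts gives level `n`. -/
lemma HasWeightDecomposition.retract (hN : ∀ n, HasWeightDecomposition D n N)
    (hm : weightGT D m N) (h : IsRetract M N) (n : ℤ) : HasWeightDecomposition D n M := by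
  obtain hnm | hmn := le_total n m
  · exact .of_weightGT (weightGT_antitone D hnm _ (h.prop hm))
  · induction n, hmn using Int.leInduction generalizing M with
    | base => exact .of_weightGT (h.prop hm)
    | succ n _ ih =>
      obtain ⟨T, hT, rfl, rfl, hF⟩ := exists_distTriang_of_isRetract h
      exact .cone hT (by simpa using ih hF) (hN (n + 1))

lemma TriangClosure.exists_weightGT (hD : IsNegative D) (hM : TriangClosure D M) :
    ∃ n, weightGT D n M := by
  induction hM with
  | of X hX => exact ⟨-1, hD.weightGT hX⟩
  | zero X hX => exact ⟨0, ObjectProperty.prop_of_isZero _ hX⟩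
  | shift X k _ ih =>
    obtain ⟨n, hn⟩ := ih
    exact ⟨n + k, weightGT_shift hn k rfl⟩
  | ext f g h hT _ _ ihX ihY =>
    obtain ⟨n, hn⟩ := ihX
    obtain ⟨m, hm⟩ := ihY
    exact ⟨min m (n + 1), (weightGT D _).ext_of_isTriangulatedClosed₂ _
      (rot_of_distTriang _ hT)
      (weightGT_antitone D (min_le_left _ _) _ hm)
      (weightGT_antitone D (min_le_right _ _) _ (weightGT_shift hn 1 rfl))⟩
  | retract X Y r _ ih =>
    obtain ⟨n, hn⟩ := ih
    exact ⟨n, r.prop hn⟩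

lemma TriangClosure.exists_weightLE (hM : TriangClosure D M) : ∃ n, weightLE D n M := by
  induction hM with
  | of X hX => exact ⟨0, shiftsLE_subset_weightLE (subset_shiftsLE_zero hX)⟩
  | zero X hX => exact ⟨0, ObjectProperty.prop_of_isZero _ hX⟩
  | shift X k _ ih =>
    obtain ⟨n, hn⟩ := ih
    exact ⟨n + k, weightLE_shift hn k rfl⟩
  | ext f g h hT _ _ ihX ihY =>
    obtain ⟨n, hn⟩ := ihX
    obtain ⟨m, hm⟩ := ihY
    exact ⟨max m (n + 1), (weightLE D _).ext_of_isTriangulatedClosed₂ _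
      (rot_of_distTriang _ hT)
      (weightLE_monotone D (le_max_left _ _) _ hm)
      (weightLE_monotone D (le_max_right _ _) _ (weightLE_shift hn 1 rfl))⟩
  | retract X Y r _ ih =>
    obtain ⟨n, hn⟩ := ih
    exact ⟨n, r.prop hn⟩

lemma TriangClosure.hasWeightDecomposition (hD : IsNegative D) (hM : TriangClosure D M) (n : ℤ) :
    HasWeightDecomposition D n M := by
  induction hM generalizing n with
  | of X hX =>
    obtain hn | hn := le_or_gt 0 n
    · exact .of_extClosure (.of X (shiftsLE_subset_shiftsLE hn (subset_shiftsLE_zero hX)))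
    · exact .of_weightGT (weightGT_antitone D (by lia) _ (hD.weightGT hX))
  | zero X hX => exact .of_weightGT (ObjectProperty.prop_of_isZero _ hX)
  | shift X k _ ih => exact (ih (n - k)).shift k (by lia)
  | ext f g h hT _ _ ihX ihY => exact .cone hT (ihX (n - 1)) (ihY n)
  | retract X Y r hY ih =>
    obtain ⟨m, hm⟩ := hY.exists_weightGT hD
    exact .retract ih hm r n

end WeightDecompositions

section GeneratedWeightStructure

variable {D : Set C}

/-- The class `w ≤ 0` of the weight structure on `⟨D⟩` generated by `D`. -/
def generatedLE (D : Set C) : Set C := {X | TriangClosure D X ∧ weightLE D 0 X}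

/-- The class `w ≥ 0` of the weight structure on `⟨D⟩` generated by `D`. -/
def generatedGE (D : Set C) : Set C := {X | TriangClosure D X ∧ weightGT D (-1) X}

lemma IsNegative.isWeightStructureOn (hD : IsNegative D) :
    IsWeightStructureOn {X | TriangClosure D X} (generatedLE D)
      (generatedGE D) where
  le_sub _ h := h.1
  ge_sub _ h := h.1
  retract_le _ _ hX r hY := ⟨hX, r.prop hY.2⟩
  retract_ge _ _ hX r hY := ⟨hX, r.prop hY.2⟩
  shift_le X hX := ⟨hX.1.shift X _, weightLE_monotone D (by lia) _ (weightLE_shift hX.2 (-1) rfl)⟩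
  shift_ge X hX := ⟨hX.1.shift X _, weightGT_antitone D (by lia) _ (weightGT_shift hX.2 1 rfl)⟩
  orthogonal _ _ hX hY f := hX.2 f (weightGT_shift hY.2 1 rfl)
  decomp M hM := by
    obtain ⟨A, B, f, g, h, hT, hA, hB⟩ := hM.hasWeightDecomposition hD 0
    exact ⟨A, B, f, g, h, hT, ⟨hA.triangClosure, hA.weightLE⟩,
      (TriangClosure.ext f g h hT hA.triangClosure hM).shift B (-1), weightGT_shift hB (-1) rfl⟩

lemma IsNegative.subset_generatedLE_inter_generatedGE (hD : IsNegative D) :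
    D ⊆ generatedLE D ∩ generatedGE D := fun Z hZ =>
  ⟨⟨.of Z hZ, shiftsLE_subset_weightLE (subset_shiftsLE_zero hZ)⟩, .of Z hZ, hD.weightGT hZ⟩

lemma TriangClosure.exists_shift_mem_generatedLE {X : C} (hX : TriangClosure D X) :
    ∃ n : ℤ, X⟦n⟧ ∈ generatedLE D := by
  obtain ⟨n, hn⟩ := hX.exists_weightLE
  exact ⟨-n, hX.shift X _, weightLE_shift hn (-n) (by lia)⟩

lemma TriangClosure.exists_shift_mem_generatedGE (hD : IsNegative D) {X : C}
    (hX : TriangClosure D X) : ∃ n : ℤ, X⟦n⟧ ∈ generatedGE D := by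
  obtain ⟨n, hn⟩ := hX.exists_weightGT hD
  exact ⟨-1 - n, hX.shift X _, weightGT_shift hn (-1 - n) (by lia)⟩

end GeneratedWeightStructure

/-- Additivity of the full subcategory on `D`: it contains a zero object and all biproducts of its
objects. -/
structure IsAdditiveSub {𝒜 : Type*} [Category 𝒜] [HasZeroMorphisms 𝒜] (D : Set 𝒜) : Prop where
  exists_isZero : ∃ Z : 𝒜, IsZero Z ∧ Z ∈ D
  biproduct_mem : ∀ ⦃X Y : 𝒜⦄, X ∈ D → Y ∈ D → ∀ b : BinaryBicone X Y, b.IsBilimit → b.pt ∈ D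

section Heart

variable {D : Set C}

lemma ExtClosure.exists_factorization (hadd : IsAdditiveSub D) (hneg : IsNegative D) {A Y : C}
    (hA : ExtClosure (shiftsLE D 0) A) (hY : weightGT D (-1) Y) (f : A ⟶ Y) :
    ∃ Z ∈ D, ∃ (u : A ⟶ Z) (v : Z ⟶ Y), f = u ≫ v := by
  obtain ⟨O, -, hO⟩ := hadd.exists_isZero
  induction hA with
  | zero A hA => exact ⟨O, hO, 0, 0, hA.eq_of_src _ _⟩
  | of A hA =>
    obtain ⟨Z, hZ, i, hi, ⟨e⟩⟩ := hA
    obtain hi | rfl := hi.lt_or_eq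
    · exact ⟨O, hO, 0, 0, by rw [hY f ⟨Z, hZ, i, by lia, ⟨e⟩⟩, zero_comp]⟩
    · exact ⟨Z, hZ, (e ≪≫ shiftZero ℤ Z).hom, (e ≪≫ shiftZero ℤ Z).inv ≫ f, by
        rw [Iso.hom_inv_id_assoc]⟩
  | @ext A₁ A A₂ i p h hT _ hA₂ ih₁ ih₂ =>
    obtain ⟨Z₁, hZ₁, u₁, v₁, huv₁⟩ := ih₁ (i ≫ f)
    obtain ⟨t, rfl⟩ : ∃ t : A ⟶ Z₁, u₁ = i ≫ t := exists_eq_mor₁_comp hT u₁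
      (hA₂.weightLE _ (weightGT_shift (hneg.weightGT hZ₁) 1 rfl))
    have hi : i ≫ (f - t ≫ v₁) = 0 := by simp [huv₁]
    obtain ⟨q : A₂ ⟶ Y, hq⟩ := Triangle.yoneda_exact₂ _ hT (f - t ≫ v₁) hi
    obtain ⟨Z₂, hZ₂, u₂, v₂, rfl⟩ := ih₂ q
    refine ⟨Z₁ ⊞ Z₂, hadd.biproduct_mem hZ₁ hZ₂ _ (BinaryBiproduct.isBilimit _ _),
      biprod.lift t (p ≫ u₂), biprod.desc v₁ v₂, ?_⟩
    rw [biprod.lift_desc, Category.assoc, ← sub_eq_iff_eq_add']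
    exact hq

/-- Since `Hom(X, B) = 0`, the object `X` is a retract of the first term `A` of a weight
decomposition, and `A ⟶ X` factors through an object of `D`. -/
lemma TriangClosure.mem_retractClosure (hadd : IsAdditiveSub D) (hneg : IsNegative D) {X : C}
    (hX : TriangClosure D X) (hle : weightLE D 0 X) (hgt : weightGT D (-1) X) :
    X ∈ retractClosure D := by
  obtain ⟨A, B, f, g, h, hT, hA, hB⟩ := hX.hasWeightDecomposition hneg 0
  obtain ⟨s : X ⟶ A, hs⟩ := Triangle.coyoneda_exact₂ _ hT (𝟙 X) (hle _ hB)
  obtain ⟨Z, hZ, u, v, rfl⟩ := hA.exists_factorization hadd hneg hgt f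
  exact ⟨Z, hZ, s ≫ u, v, by rw [Category.assoc]; exact hs.symm⟩

lemma generatedLE_inter_generatedGE (hadd : IsAdditiveSub D) (hneg : IsNegative D) :
    generatedLE D ∩ generatedGE D = retractClosure D := by
  refine Set.Subset.antisymm (fun X ⟨hle, hgt⟩ => hle.1.mem_retractClosure hadd hneg hle.2 hgt.2) ?_
  rintro X ⟨Z, hZ, r⟩
  obtain ⟨hle, hgt⟩ := hneg.subset_generatedLE_inter_generatedGE hZ
  have hX : TriangClosure D X := .retract X Z r (.of Z hZ)
  exact ⟨⟨hX, r.prop hle.2⟩, hX, r.prop hgt.2⟩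

lemma TriangClosure.exists_isRetract_shift (hadd : IsAdditiveSub D) (hneg : IsNegative D) {X : C}
    (hX : TriangClosure D X) {n : ℤ} (hle : weightLE D n X) (hgt : weightGT D (n - 1) X) :
    ∃ Z ∈ D, IsRetract X (Z⟦n⟧) := by
  obtain ⟨Z, hZ, r⟩ := (hX.shift X (-n)).mem_retractClosure hadd hneg
    (weightLE_shift hle (-n) (by lia)) (weightGT_shift hgt (-n) (by lia))
  exact ⟨Z, hZ, (IsRetract.of_iso (shiftNegShift X n).symm).trans (r.map (shiftFunctor C n))⟩

/-- Peel off the lowest weight `n + 1`: it contributes a retract of some `Z[n + 1]`, `Z ∈ D`. -/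
lemma TriangClosure.prop_of_weightGT (hadd : IsAdditiveSub D) (hneg : IsNegative D)
    (P : ObjectProperty C) [P.IsStableUnderRetracts] [P.IsTriangulatedClosed₂] {n : ℤ}
    (hP : ∀ Z ∈ D, ∀ i > n, P (Z⟦i⟧)) {X : C} (hX : TriangClosure D X) (hgt : weightGT D n X) :
    P X := by
  obtain ⟨k, hnk, hk⟩ : ∃ k, n ≤ k - 1 ∧ weightLE D k X := by
    obtain ⟨k, hk⟩ := hX.exists_weightLE
    exact ⟨max k (n + 1), by lia, weightLE_monotone D (le_max_left _ _) _ hk⟩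
  induction n, hnk using Int.leInductionDown generalizing X with
  | base =>
    obtain ⟨Z, hZ, r⟩ := hX.exists_isRetract_shift hadd hneg hk hgt
    exact r.prop (hP Z hZ k (by lia))
  | pred n hn ih =>
    obtain ⟨A, B, f, g, h, hT, hA, hB⟩ := hX.hasWeightDecomposition hneg n
    have hA_gt : weightGT D (n - 1) A := (weightGT D _).ext_of_isTriangulatedClosed₂ _
      (inv_rot_of_distTriang _ hT) (weightGT_shift hB (-1) rfl) hgt
    have hB_le : weightLE D k B := (weightLE D _).ext_of_isTriangulatedClosed₂ _
      (rot_of_distTriang _ hT) hk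
      (weightLE_monotone D (by lia) _ (weightLE_shift hA.weightLE 1 rfl))
    obtain ⟨Z, hZ, r⟩ := hA.triangClosure.exists_isRetract_shift hadd hneg hA.weightLE hA_gt
    exact P.ext_of_isTriangulatedClosed₂ _ hT (r.prop (hP Z hZ n (by lia)))
      (ih (fun Z hZ i hi => hP Z hZ i (by lia)) (.ext f g h hT hA.triangClosure hX) hB hB_le)

end Heart

section Comparison

variable {D Q LEs GEs : Set C}

lemma IsWeightStructureOn.shift_mem_le (W : IsWeightStructureOn Q LEs GEs) {X : C}
    (hQ : ∀ i : ℤ, X⟦i⟧ ∈ Q) (hX : X ∈ LEs) {i : ℤ} (hi : i ≤ 0) : X⟦i⟧ ∈ LEs := by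
  induction i, hi using Int.leInductionDown with
  | base => exact W.retract_le (hQ 0) (.of_iso (shiftZero ℤ X)) hX
  | pred i _ ih => exact W.retract_le (hQ _) (.of_iso (shiftAdd X i (-1))) (W.shift_le ih)

lemma IsWeightStructureOn.shift_mem_ge (W : IsWeightStructureOn Q LEs GEs) {X : C}
    (hQ : ∀ i : ℤ, X⟦i⟧ ∈ Q) (hX : X ∈ GEs) {i : ℤ} (hi : 0 ≤ i) : X⟦i⟧ ∈ GEs := by
  induction i, hi using Int.leInduction with
  | base => exact W.retract_ge (hQ 0) (.of_iso (shiftZero ℤ X)) hX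
  | succ i _ ih => exact W.retract_ge (hQ _) (.of_iso (shiftAdd X i 1)) (W.shift_ge ih)

lemma IsWeightStructureOn.weightGT_of_mem_ge (W : IsWeightStructureOn Q LEs GEs)
    (hQ : {X | TriangClosure D X} ⊆ Q) (hD : D ⊆ LEs) {Y : C} (hY : Y ∈ GEs) :
    weightGT D (-1) Y := by
  rintro X f ⟨Z, hZ, i, hi, ⟨e⟩⟩
  have hZi : Z⟦i + 1⟧ ∈ LEs :=
    W.shift_mem_le (fun j => hQ (.shift Z j (.of Z hZ))) (hD hZ) (by lia)
  exact eq_zero_of_shift 1 (shiftAdd Z i 1 ≪≫ (shiftFunctor C 1).mapIso e.symm) (Iso.refl _)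
    (W.orthogonal hZi hY) f

lemma IsWeightStructureOn.eq_zero_of_weightGT (W : IsWeightStructureOn Q LEs GEs)
    (hadd : IsAdditiveSub D) (hneg : IsNegative D) (hQ : {X | TriangClosure D X} ⊆ Q)
    (hD : D ⊆ GEs) {X Y : C} (hX : X ∈ LEs) (hY : TriangClosure D Y) (hgt : weightGT D 0 Y)
    (f : X ⟶ Y) : f = 0 := by
  refine hY.prop_of_weightGT hadd hneg (ObjectProperty.rightOrthogonal (· ∈ LEs)) ?_ hgt f hX
  intro Z hZ i hi A g hA
  have hZi : Z⟦i - 1⟧ ∈ GEs :=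
    W.shift_mem_ge (fun j => hQ (.shift Z j (.of Z hZ))) (hD hZ) (by lia)
  have e : Z⟦i - 1⟧⟦(1 : ℤ)⟧ ≅ Z⟦i⟧ := ((shiftFunctorAdd' C (i - 1) 1 i (by lia)).app Z).symm
  rw [← cancel_mono e.inv, W.orthogonal hA hZi (g ≫ e.inv), zero_comp]

lemma IsWeightStructureOn.inter_le_eq (W : IsWeightStructureOn Q LEs GEs)
    (hadd : IsAdditiveSub D) (hneg : IsNegative D) (hQ : {X | TriangClosure D X} ⊆ Q)
    (hD : D ⊆ LEs ∩ GEs) :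
    {X | TriangClosure D X} ∩ LEs = generatedLE D := by
  refine Set.Subset.antisymm (fun X hX => ⟨hX.1, ?_⟩) (fun X hX => ⟨hX.1, ?_⟩)
  · obtain ⟨A, B, f, g, h, hT, hA, hB⟩ := hX.1.hasWeightDecomposition hneg 0
    have hg : g = 0 := W.eq_zero_of_weightGT hadd hneg hQ (fun Z hZ => (hD hZ).2) hX.2
      (.ext f g h hT hA.triangClosure hX.1) hB g
    exact (isRetract_of_mor₂_eq_zero hT hg).prop hA.weightLE
  · obtain ⟨A, B, f, g, h, hT, hA, hB⟩ := W.decomp X (hQ hX.1)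
    have hB' : weightGT D 0 B := (IsRetract.of_iso (shiftNegShift B 1).symm).prop
      (weightGT_shift (W.weightGT_of_mem_ge hQ (fun Z hZ => (hD hZ).1) hB) 1 rfl)
    exact W.retract_le (hQ hX.1) (isRetract_of_mor₂_eq_zero hT (hX.2 g hB')) hA

lemma IsWeightStructureOn.inter_ge_eq (W : IsWeightStructureOn Q LEs GEs)
    (hadd : IsAdditiveSub D) (hneg : IsNegative D) (hQ : {X | TriangClosure D X} ⊆ Q)
    (hD : D ⊆ LEs ∩ GEs) :
    {X | TriangClosure D X} ∩ GEs = generatedGE D := by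
  refine Set.Subset.antisymm
    (fun X hX => ⟨hX.1, W.weightGT_of_mem_ge hQ (fun Z hZ => (hD hZ).1) hX.2⟩)
    (fun X hX => ⟨hX.1, ?_⟩)
  have hX₁ : TriangClosure D (X⟦(1 : ℤ)⟧) := hX.1.shift X 1
  obtain ⟨A, B, f, g, h, hT, hA, hB⟩ := W.decomp (X⟦(1 : ℤ)⟧) (hQ hX₁)
  have hf : f = 0 := W.eq_zero_of_weightGT hadd hneg hQ (fun Z hZ => (hD hZ).2) hA hX₁
    (weightGT_shift hX.2 1 rfl) f
  have r : IsRetract (X⟦(1 : ℤ)⟧) B := isRetract_of_mor₁_eq_zero hT hf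
  exact W.retract_ge (hQ hX.1)
    ((IsRetract.of_iso (shiftShiftNeg X 1).symm).trans (r.map (shiftFunctor C (-1)))) hB

lemma WeightStructure.isWeightStructureOn_univ (w : WeightStructure C) :
    IsWeightStructureOn Set.univ w.LE w.GE where
  le_sub := Set.subset_univ _
  ge_sub := Set.subset_univ _
  retract_le _ _ _ r h := w.retract_LE r h
  retract_ge _ _ _ r h := w.retract_GE r h
  shift_le := w.shift_LE
  shift_ge := w.shift_GE
  orthogonal := w.orthogonal
  decomp M _ := w.decomp M

end Comparison

/-- a negative additive full subcategory `D` of `C` generates a unique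
bounded weight structure on the smallest Karoubi-closed triangulated subcategory
`T = ⟨D⟩` with `D` contained in the heart; the heart is the Karoubi-closure of `D`
in `C`, and if `D ⊆ C_{w=0}` for a weight structure `w` on `C` then the embedding
`T → C` is strictly weight-exact. -/
theorem statement6 (D : Set C)
    (hzero : ∃ Z : C, IsZero Z ∧ Z ∈ D)
    (hadd : ∀ ⦃X Y : C⦄, X ∈ D → Y ∈ D →
      ∀ b : BinaryBicone X Y, b.IsBilimit → b.pt ∈ D)
    (hneg : ∀ ⦃X Y : C⦄, X ∈ D → Y ∈ D → ∀ i : ℤ, 0 < i → ∀ f : X ⟶ Y⟦i⟧, f = 0) :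
    (∃! LG : Set C × Set C,
      IsWeightStructureOn {X : C | TriangClosure D X} LG.1 LG.2 ∧ D ⊆ LG.1 ∩ LG.2) ∧
    (∀ LEs GEs : Set C,
      IsWeightStructureOn {X : C | TriangClosure D X} LEs GEs → D ⊆ LEs ∩ GEs →
      ((∀ X : C, TriangClosure D X → (∃ n : ℤ, X⟦n⟧ ∈ LEs) ∧ (∃ n : ℤ, X⟦n⟧ ∈ GEs)) ∧
       LEs ∩ GEs = retractClosure D ∧
       (∀ w : WeightStructure C, D ⊆ w.LE ∩ w.GE →
         LEs = {X : C | TriangClosure D X} ∩ w.LE ∧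
         GEs = {X : C | TriangClosure D X} ∩ w.GE))) := by
  replace hneg : IsNegative D := hneg
  have hadd' : IsAdditiveSub D := ⟨hzero, hadd⟩
  have huniq : ∀ LEs GEs : Set C, IsWeightStructureOn {X : C | TriangClosure D X} LEs GEs →
      D ⊆ LEs ∩ GEs → LEs = generatedLE D ∧ GEs = generatedGE D := by
    intro LEs GEs W hDW
    rw [← W.inter_le_eq hadd' hneg subset_rfl hDW, ← W.inter_ge_eq hadd' hneg subset_rfl hDW]
    exact ⟨(Set.inter_eq_right.2 W.le_sub).symm, (Set.inter_eq_right.2 W.ge_sub).symm⟩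
  refine ⟨⟨(_, _), ⟨hneg.isWeightStructureOn, hneg.subset_generatedLE_inter_generatedGE⟩, ?_⟩, ?_⟩
  · rintro ⟨LEs, GEs⟩ ⟨W, hDW⟩
    exact Prod.ext (huniq _ _ W hDW).1 (huniq _ _ W hDW).2
  · intro LEs GEs W hDW
    obtain ⟨rfl, rfl⟩ := huniq LEs GEs W hDW
    refine ⟨fun X hX => ⟨hX.exists_shift_mem_generatedLE, hX.exists_shift_mem_generatedGE hneg⟩,
      generatedLE_inter_generatedGE hadd' hneg, fun w hw => ?_⟩
    have W' := w.isWeightStructureOn_univ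
    exact ⟨(W'.inter_le_eq hadd' hneg (Set.subset_univ _) hw).symm,
      (W'.inter_ge_eq hadd' hneg (Set.subset_univ _) hw).symm⟩

end CWH
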